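/- arXiv:2002.05855 — 2 statements merged into one kernel-verified Lean document; each statement's English description precedes it below -/
import Mathlib

section
/- Let u ≤ w in S_n. The family of vectors (e_a − e_b) in ℝ^n, indexed by the pairs (a,b) ∈ E_w(u)^+, is linearly independent. -/
open Equiv

/-- The length (number of inversions) of a permutation of `Fin n`. -/
def invLen {n : ℕ} (u : Equiv.Perm (Fin n)) : ℕ :=
  (Finset.univ.filter (fun p : Fin n × Fin n => p.1 < p.2 ∧ u p.2 < u p.1)).card

/-- A permutation is a transposition if it swaps two distinct elements. -/
def IsTransposition {n : ℕ} (σ : Equiv.Perm (Fin n)) : Prop :=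
  ∃ a b : Fin n, a ≠ b ∧ σ = Equiv.swap a b

/-- Bruhat order on permutations: `v ≤ w` iff `w` is obtained from `v` by left
multiplication by transpositions, each strictly increasing the length. -/
def BruhatLE {n : ℕ} (v w : Equiv.Perm (Fin n)) : Prop :=
  ∃ (m : ℕ) (c : ℕ → Equiv.Perm (Fin n)),
    c 0 = v ∧ c m = w ∧
    ∀ k, k < m →
      (∃ τ : Equiv.Perm (Fin n), IsTransposition τ ∧ c (k + 1) = τ * c k) ∧
      invLen (c k) < invLen (c (k + 1))

/-- The edge set `Ẽ_w(u)`. -/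
def Etilde {n : ℕ} (w u : Equiv.Perm (Fin n)) : Set (Fin n × Fin n) :=
  { p | ∃ i j : Fin n, i < j ∧ p = (u i, u j) ∧
      BruhatLE (Equiv.swap (u i) (u j) * u) w ∧
      |(invLen (Equiv.swap (u i) (u j) * u) : ℤ) - (invLen u : ℤ)| = 1 }

/-- The transitive reduction `E_w(u)` of `Ẽ_w(u)`: edges `(a,b)` of `Ẽ_w(u)` such that
there is no directed path from `a` to `b` in `Ẽ_w(u)` using at least two edges. -/
def Ered {n : ℕ} (w u : Equiv.Perm (Fin n)) : Set (Fin n × Fin n) :=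
  { p | p ∈ Etilde w u ∧
      ¬ ∃ c : Fin n, (p.1, c) ∈ Etilde w u ∧
        Relation.TransGen (fun a b : Fin n => (a, b) ∈ Etilde w u) c p.2 }

/-- `E_w(u)^+`: edges `(a,b)` of `E_w(u)` with `a < b`. -/
def Eplus {n : ℕ} (w u : Equiv.Perm (Fin n)) : Set (Fin n × Fin n) :=
  { p ∈ Ered w u | p.1 < p.2 }

/-- `E_w(u)^-`: edges `(a,b)` of `E_w(u)` with `a > b`. -/
def Eminus {n : ℕ} (w u : Equiv.Perm (Fin n)) : Set (Fin n × Fin n) :=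
  { p ∈ Ered w u | p.2 < p.1 }

/-- The moment-map image `μ(u) = (u⁻¹(1), …, u⁻¹(n)) ∈ ℝⁿ`
(using values `1, …, n`, i.e. `Fin.val + 1`). -/
def mu {n : ℕ} (u : Equiv.Perm (Fin n)) : Fin n → ℝ :=
  fun k => ((u⁻¹ k : ℕ) : ℝ) + 1

/-- The standard basis vector `e_a` of `ℝⁿ`. -/
def stdB {n : ℕ} (a : Fin n) : Fin n → ℝ :=
  fun k => if k = a then 1 else 0



/-- Auxiliary involution on pairs of positions. -/
def hMap {n : ℕ} (i j : Fin n) (x : Fin n × Fin n) : Fin n × Fin n :=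
  if ((x.1 = i ∨ x.1 = j) ∧ i < x.2 ∧ x.2 < j) ∨ ((x.2 = i ∨ x.2 = j) ∧ i < x.1 ∧ x.1 < j)
  then x else (swap i j x.1, swap i j x.2)

theorem hMap_invol {n : ℕ} (i j : Fin n) (hij : i < j) (x : Fin n × Fin n) :
    hMap i j (hMap i j x) = x := by
  obtain ⟨p, q⟩ := x
  unfold hMap
  simp only [swap_apply_def]
  grind

/-- The finset of inversions. -/
def invSet {n : ℕ} (u : Equiv.Perm (Fin n)) : Finset (Fin n × Fin n) :=
  Finset.univ.filter (fun p : Fin n × Fin n => p.1 < p.2 ∧ u p.2 < u p.1)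

theorem mem_invSet {n : ℕ} (u : Equiv.Perm (Fin n)) (p q : Fin n) :
    (p, q) ∈ invSet u ↔ p < q ∧ u q < u p := by
  unfold invSet
  rw [Finset.mem_filter]
  simp

theorem hMap_mem {n : ℕ} (u : Equiv.Perm (Fin n)) (i j : Fin n) (hij : i < j) (hu : u i < u j)
    (x : Fin n × Fin n) (hx : x ∈ invSet u) :
    hMap i j x ∈ (invSet (u * swap i j)).erase (i, j) := by
  obtain ⟨p, q⟩ := x
  rw [mem_invSet] at hx
  rw [Finset.mem_erase, ← Prod.mk.eta (p := hMap i j (p, q)), mem_invSet]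
  unfold hMap
  simp only [Perm.mul_apply, swap_apply_def]
  grind

theorem hMap_mem_back {n : ℕ} (u : Equiv.Perm (Fin n)) (i j : Fin n) (hij : i < j)
    (hu : u i < u j) (he : ∀ k, i < k → k < j → u i < u k → u k < u j → False)
    (x : Fin n × Fin n) (hx : x ∈ (invSet (u * swap i j)).erase (i, j)) :
    hMap i j x ∈ invSet u := by
  obtain ⟨p, q⟩ := x
  have hp := he p
  have hq := he q
  have i1 : u p = u i → p = i := fun h => u.injective h
  have i2 : u p = u j → p = j := fun h => u.injective h
  have i3 : u q = u i → q = i := fun h => u.injective h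
  have i4 : u q = u j → q = j := fun h => u.injective h
  clear he
  obtain ⟨hne, hx⟩ := Finset.mem_erase.1 hx
  rw [mem_invSet] at hx
  rw [← Prod.mk.eta (p := hMap i j (p, q)), mem_invSet]
  simp only [Perm.mul_apply] at hx
  simp only [ne_eq, Prod.mk.injEq, not_and] at hne
  obtain ⟨h1, h2⟩ := hx
  unfold hMap
  simp only [swap_apply_def] at h2 ⊢
  by_cases a1 : p = i <;> by_cases a2 : p = j <;> by_cases a3 : q = i <;> by_cases a4 : q = j <;>
    simp only [a1, a2, a3, a4, if_true, if_false] at * <;> grind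

theorem mem_inv_swap {n : ℕ} (u : Equiv.Perm (Fin n)) (i j : Fin n) (hij : i < j)
    (hu : u i < u j) : (i, j) ∈ invSet (u * swap i j) := by
  rw [mem_invSet]
  simp [hij, hu]

theorem invLen_lt {n : ℕ} (u : Equiv.Perm (Fin n)) (i j : Fin n) (hij : i < j)
    (hu : u i < u j) : invLen u < invLen (u * swap i j) := by
  have h1 : (invSet u).card ≤ ((invSet (u * swap i j)).erase (i, j)).card :=
    Finset.card_le_card_of_injOn (hMap i j) (fun x hx => hMap_mem u i j hij hu x hx)
      (fun x _ y _ h => by rw [← hMap_invol i j hij x, h, hMap_invol i j hij y])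
  have h2 := Finset.card_erase_add_one (mem_inv_swap u i j hij hu)
  change (invSet u).card < (invSet (u * swap i j)).card
  omega

theorem invLen_eq {n : ℕ} (u : Equiv.Perm (Fin n)) (i j : Fin n) (hij : i < j)
    (hu : u i < u j) (he : ∀ k, i < k → k < j → u i < u k → u k < u j → False) :
    invLen (u * swap i j) = invLen u + 1 := by
  have h1 : ((invSet (u * swap i j)).erase (i, j)).card ≤ (invSet u).card :=
    Finset.card_le_card_of_injOn (hMap i j) (fun x hx => hMap_mem_back u i j hij hu he x hx)
      (fun x _ y _ h => by rw [← hMap_invol i j hij x, h, hMap_invol i j hij y])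
  have h2 := Finset.card_erase_add_one (mem_inv_swap u i j hij hu)
  have h3 := invLen_lt u i j hij hu
  change (invSet (u * swap i j)).card = (invSet u).card + 1
  change (invSet u).card < (invSet (u * swap i j)).card at h3
  omega

theorem swap_mul_eq {n : ℕ} (u : Equiv.Perm (Fin n)) (i j : Fin n) :
    swap (u i) (u j) * u = u * swap i j := by
  rw [Equiv.mul_swap_eq_swap_mul]

theorem no_between {n : ℕ} (u : Equiv.Perm (Fin n)) (i j k : Fin n)
    (h : |(invLen (u * swap i j) : ℤ) - (invLen u : ℤ)| = 1)
    (h1 : i < k) (h2 : k < j) (h3 : u i < u k) (h4 : u k < u j) : False := by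
  have a1 := invLen_lt u i k h1 h3
  have hki : k ≠ i := ne_of_gt h1
  have hjk : j ≠ k := ne_of_gt h2
  have hji : j ≠ i := ne_of_gt (h1.trans h2)
  have a2 := invLen_lt (u * swap i k) i j (h1.trans h2)
    (by simp [swap_apply_of_ne_of_ne hji hjk, h4])
  have a3 := invLen_lt (u * swap i k * swap i j) k j h2
    (by simp [swap_apply_of_ne_of_ne hki hjk.symm, h3])
  have e : u * swap i k * swap i j * swap k j = u * swap i j := by
    ext x
    simp only [Perm.mul_apply, swap_apply_def]
    grind
  rw [e] at a3
  rw [abs_eq (by norm_num)] at h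
  omega

theorem down_edge {n : ℕ} (w u : Equiv.Perm (Fin n)) (hle : BruhatLE u w) (i j : Fin n)
    (hij : i < j) (hu : u j < u i)
    (he : ∀ k, i < k → k < j → u j < u k → u k < u i → False) :
    (u i, u j) ∈ Etilde w u := by
  have key : invLen u = invLen (u * swap i j) + 1 := by
    have := invLen_eq (u * swap i j) i j hij (by simpa using hu) (by
      intro k h1 h2 h3 h4
      have e : swap i j k = k := swap_apply_of_ne_of_ne h1.ne' h2.ne
      simp only [Perm.mul_apply, e, swap_apply_left, swap_apply_right] at h3 h4
      exact he k h1 h2 h3 h4)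
    simpa [mul_assoc] using this
  refine ⟨i, j, hij, rfl, ?_, ?_⟩
  · obtain ⟨m, c, c0, cm, hc⟩ := hle
    refine ⟨m + 1, fun k => if k = 0 then swap (u i) (u j) * u else c (k - 1), by simp,
      by simp [cm], ?_⟩
    intro k hk
    rcases k with _ | k
    · refine ⟨⟨swap (u i) (u j), ⟨u i, u j, hu.ne', rfl⟩, by simp [c0]⟩, ?_⟩
      simp only [c0, swap_mul_eq]
      simp [c0, key]
    · simpa using hc k (by omega)
  · rw [swap_mul_eq, key]
    simp

theorem down_path {n : ℕ} (w u : Equiv.Perm (Fin n)) (hle : BruhatLE u w) :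
    ∀ (d : ℕ) (i j : Fin n), (j : ℕ) - i ≤ d → i < j → u j < u i →
      Relation.TransGen (fun a b : Fin n => (a, b) ∈ Etilde w u) (u i) (u j) := by
  intro d
  induction d with
  | zero => intro i j h1 h2; omega
  | succ d ih =>
    intro i j h1 h2 h3
    by_cases he : ∀ k, i < k → k < j → u j < u k → u k < u i → False
    · exact Relation.TransGen.single (down_edge w u hle i j h2 h3 he)
    · push Not at he
      obtain ⟨k, a, b, c, e, -⟩ := he
      exact (ih i k (by omega) a e).trans (ih k j (by omega) b c)

theorem Eplus_aux {n : ℕ} (w u : Equiv.Perm (Fin n)) (hle : BruhatLE u w)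
    (i j k : Fin n) (hij : i < j) (hjk : j < k)
    (h1 : (u i, u j) ∈ Eplus w u) (h2 : (u i, u k) ∈ Eplus w u) : False := by
  obtain ⟨⟨h1t, -⟩, h1lt⟩ := h1
  obtain ⟨⟨h2t, h2r⟩, h2lt⟩ := h2
  obtain ⟨i', k', hik, heq, -, hlen⟩ := h2t
  simp only [Prod.mk.injEq, EmbeddingLike.apply_eq_iff_eq] at heq
  obtain ⟨rfl, rfl⟩ := heq
  rw [swap_mul_eq] at hlen
  rcases lt_trichotomy (u j) (u k) with h | h | h
  · exact no_between u i k j hlen hij hjk h1lt h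
  · exact hjk.ne (u.injective h)
  · exact h2r ⟨u j, h1t, down_path w u hle _ j k le_rfl hjk h⟩

theorem Eplus_inj {n : ℕ} (w u : Equiv.Perm (Fin n)) (hle : BruhatLE u w)
    (p q : Fin n × Fin n) (hp : p ∈ Eplus w u) (hq : q ∈ Eplus w u) (h : p.1 = q.1) :
    p = q := by
  obtain ⟨i, j, hij, rfl, -⟩ := hp.1.1
  obtain ⟨i', k, hik, rfl, -⟩ := hq.1.1
  have : i = i' := u.injective h
  subst this
  rcases lt_trichotomy j k with h | h | h
  · exact (Eplus_aux w u hle i j k hij h hp hq).elim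
  · rw [h]
  · exact (Eplus_aux w u hle i k j hik h hq hp).elim

theorem stmt4 {n : ℕ} (hn : 1 ≤ n) (w u : Equiv.Perm (Fin n)) (hle : BruhatLE u w) :
    LinearIndependent ℝ (fun p : Eplus w u => stdB p.1.1 - stdB p.1.2) := by
  classical
  have := Fintype.ofFinite (Eplus w u)
  rw [Fintype.linearIndependent_iff]
  intro g hg
  have main : ∀ (d : ℕ) (p : Eplus w u), (p.1.1 : ℕ) = d → g p = 0 := by
    intro d
    induction d using Nat.strong_induction_on with
    | _ d ih =>
      intro p hp
      have h0 := congrFun hg p.1.1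
      rw [Finset.sum_apply, Finset.sum_eq_single p] at h0
      · have hlt : p.1.1 < p.1.2 := p.2.2
        simpa [stdB, hlt.ne] using h0
      · intro q _ hqp
        have hlt : q.1.1 < q.1.2 := q.2.2
        have h1 : p.1.1 ≠ q.1.1 := fun h =>
          hqp (Subtype.ext (Eplus_inj w u hle _ _ q.2 p.2 h.symm))
        by_cases h2 : p.1.1 = q.1.2
        · rw [ih q.1.1 (by rw [← hp, h2]; exact hlt) q rfl]
          simp
        · simp [stdB, h1, h2]
      · simp
  exact fun p => main _ p rfl
end

section
/- Let u ≤ w in S_n. There exists a linear map F : ℝ^n → ℝ such that F(μ(t_{a,b} · u)) = F(μ(u)) for every (a,b) ∈ E_w(u)^+ and F(μ(t_{a,b} · u)) > F(μ(u)) for every (a,b) ∈ E_w(u)^−; equivalently, F(e_a − e_b) = 0 for every (a,b) ∈ E_w(u)^+ and F(e_a − e_b) > 0 for every (a,b) ∈ E_w(u)^−. -/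
open Equiv

section Planar

variable {V : Type*}

theorem rtg_mono (x : V → ℕ) (G : V → V → Prop) (hx : ∀ a b, G a b → x a < x b)
    {a b : V} (h : Relation.ReflTransGen G a b) : x a ≤ x b := by
  induction h with
  | refl => exact le_refl _
  | tail _ h2 ih => exact ih.trans (hx _ _ h2).le

theorem crossing (x y : V → ℕ) (hxi : Function.Injective x) (hyi : Function.Injective y)
    (G : V → V → Prop) (hx : ∀ a b, G a b → x a < x b) (hy : ∀ a b, G a b → y a < y b)
    (hrect : ∀ a b c, G a b → x a < x c → x c < x b → y a < y c → y c < y b → False)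
    (hplus : ∀ a b c d, G a b → G c d → x a < x c → y c < y a → x d < x b → y b < y d → False)
    (hpred : ∀ a b c, G a b → G c b → x a < x c → y c < y a → False)
    (N : ℕ) : ∀ a c a' c' : V, x a' + x c' ≤ x a + x c + N →
      Relation.ReflTransGen G a a' → Relation.ReflTransGen G c c' →
      x a < x c → y c < y a → (a' = c' ∨ (x c' < x a' ∧ y a' < y c')) → False := by
  induction N with
  | zero =>
    intro a c a' c' hN ha hc h1 h2 h3
    have := rtg_mono x G hx ha
    have := rtg_mono x G hx hc
    have ea : a = a' := hxi (by omega)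
    have ec : c = c' := hxi (by omega)
    subst ea ec
    rcases h3 with h3 | h3
    · subst h3; omega
    · omega
  | succ N ih =>
    intro a c a' c' hN ha hc h1 h2 h3
    have hay := rtg_mono y G hy ha
    have hcy := rtg_mono y G hy hc
    have hax := rtg_mono x G hx ha
    have hcx := rtg_mono x G hx hc
    rcases ha.cases_head with ea | ⟨a1, ga, ha1⟩
    · subst ea
      rcases h3 with h3 | h3
      · subst h3; omega
      · omega
    rcases hc.cases_head with ec | ⟨c1, gc, hc1⟩
    · subst ec
      rcases h3 with h3 | h3
      · subst h3; omega
      · omega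
    have xa := hx _ _ ga
    have ya := hy _ _ ga
    have xc := hx _ _ gc
    have yc := hy _ _ gc
    by_cases e : a1 = c1
    · subst e; exact hpred a a1 c ga gc h1 h2
    have ex : x a1 ≠ x c1 := fun h => e (hxi h)
    have ey : y a1 ≠ y c1 := fun h => e (hyi h)
    by_cases p1 : x a1 < x c
    · exact ih a1 c a' c' (by omega) ha1 hc p1 (by omega) h3
    by_cases p1e : x a1 = x c
    · have := hxi p1e
      subst this; omega
    by_cases p2 : y c1 < y a
    · exact ih a c1 a' c' (by omega) ha hc1 (by omega) p2 h3
    by_cases p2e : y c1 = y a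
    · have := hyi p2e
      subst this; omega
    by_cases p3 : x a1 < x c1
    · by_cases p4 : y c1 < y a1
      · exact ih a1 c1 a' c' (by omega) ha1 hc1 p3 p4 h3
      · exact hrect c c1 a1 gc (by omega) p3 (by omega) (by omega)
    · by_cases p4 : y c1 < y a1
      · exact hrect a a1 c1 ga (by omega) (by omega) (by omega) p4
      · exact hplus a a1 c c1 ga gc h1 h2 (by omega) (by omega)

theorem planar_fun [Fintype V] [DecidableEq V] (x y : V → ℕ) (hxi : Function.Injective x) (hyi : Function.Injective y)
    (G : V → V → Prop) (hx : ∀ a b, G a b → x a < x b) (hy : ∀ a b, G a b → y a < y b)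
    (hrect : ∀ a b c, G a b → x a < x c → x c < x b → y a < y c → y c < y b → False)
    (hplus : ∀ a b c d, G a b → G c d → x a < x c → y c < y a → x d < x b → y b < y d → False)
    (hpred : ∀ a b c, G a b → G c b → x a < x c → y c < y a → False)
    (hsucc : ∀ a b c, G c a → G c b → x a < x b → y b < y a → False) :
    ∃ f : V → ℝ, (∀ a b, G a b → f a = f b) ∧
      (∀ a b, x a < x b → y b < y a → f b < f a) := by
  have hcross : ∀ a c a' c' : V,
      Relation.ReflTransGen G a a' → Relation.ReflTransGen G c c' →
      x a < x c → y c < y a → (a' = c' ∨ (x c' < x a' ∧ y a' < y c')) → False :=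
    fun a c a' c' => crossing x y hxi hyi G hx hy hrect hplus hpred (x a' + x c') a c a' c' (by omega)
  have hsu : ∀ c a b, G c a → G c b → a = b := by
    intro c a b ha hb
    by_contra hne
    have ex : x a ≠ x b := fun h => hne (hxi h)
    have ey : y a ≠ y b := fun h => hne (hyi h)
    have := hx _ _ ha
    have := hx _ _ hb
    have := hy _ _ ha
    have := hy _ _ hb
    rcases lt_or_gt_of_ne ex with h1 | h1 <;> rcases lt_or_gt_of_ne ey with h2 | h2
    · exact hrect c b a hb (by omega) h1 (by omega) h2
    · exact hsucc a b c ha hb h1 h2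
    · exact hsucc b a c hb ha h1 h2
    · exact hrect c a b ha (by omega) h1 (by omega) h2
  -- terminal element of each chain
  have hend : ∀ a, ∃ m, Relation.ReflTransGen G a m ∧ ∀ b, ¬ G m b := by
    obtain ⟨B, hB⟩ : ∃ B, ∀ v, x v ≤ B :=
      ⟨Finset.univ.sup x, fun v => Finset.le_sup (Finset.mem_univ v)⟩
    have key : ∀ N a, B ≤ x a + N → ∃ m, Relation.ReflTransGen G a m ∧ ∀ b, ¬ G m b := by
      intro N
      induction N with
      | zero =>
        intro a ha
        exact ⟨a, .refl, fun b hb => by have := hx _ _ hb; have := hB b; omega⟩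
      | succ N ih =>
        intro a ha
        by_cases h : ∃ b, G a b
        · obtain ⟨b, hb⟩ := h
          have := hx _ _ hb
          obtain ⟨m, hm, hm'⟩ := ih b (by omega)
          exact ⟨m, .head hb hm, hm'⟩
        · exact ⟨a, .refl, fun b hb => h ⟨b, hb⟩⟩
    exact fun a => key B a (by omega)
  choose e he he' using hend
  have heG : ∀ a b, G a b → e a = e b := by
    intro a b hab
    have huniq : Relator.RightUnique G := fun c p q hp hq => hsu c p q hp hq
    have h1 := he a
    have h2 : Relation.ReflTransGen G a (e b) := .head hab (he b)
    rcases Relation.ReflTransGen.total_of_right_unique huniq h1 h2 with h | h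
    · rcases h.cases_head with h | ⟨c, hc, _⟩
      · exact h
      · exact absurd hc (he' a c)
    · rcases h.cases_head with h | ⟨c, hc, _⟩
      · exact h.symm
      · exact absurd hc (he' b c)
  have heR : ∀ a b, Relation.ReflTransGen G a b → e a = e b := by
    intro a b h
    induction h with
    | refl => rfl
    | tail _ h2 ih => exact ih.trans (heG _ _ h2)
  -- key lemma, left side
  have keyL : ∀ a c, x a < x c → y c < y a → x (e c) ≤ x (e a) →
      ∃ a', e a' = e a ∧ x a' < x (e c) ∧ y (e c) < y a' := by
    intro a c h1 h2 h3
    have aux : ∀ z, Relation.ReflTransGen G z (e a) → Relation.ReflTransGen G a z →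
        x z < x (e c) → ∃ a', e a' = e a ∧ x a' < x (e c) ∧ y (e c) < y a' := by
      intro z hz
      induction hz using Relation.ReflTransGen.head_induction_on with
      | refl => intro _ h; omega
      | @head z z1 g hz1 ih =>
        intro haz hlt
        have ez : e z = e a := (heR _ _ haz).symm
        by_cases q : y (e c) < y z
        · exact ⟨z, ez, hlt, q⟩
        have qne : y z ≠ y (e c) := fun h => by
          have := hyi h
          subst this; omega
        by_cases q1 : x z1 < x (e c)
        · exact ih (haz.tail g) q1
        exfalso
        by_cases q2 : z1 = e c
        · exact hcross a c z1 (e c) (haz.tail g) (he c) h1 h2 (Or.inl q2)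
        have ex : x z1 ≠ x (e c) := fun h => q2 (hxi h)
        have ey : y z1 ≠ y (e c) := fun h => q2 (hyi h)
        by_cases q3 : y z1 < y (e c)
        · exact hcross a c z1 (e c) (haz.tail g) (he c) h1 h2 (Or.inr ⟨by omega, q3⟩)
        · exact hrect z z1 (e c) g hlt (by omega) (by omega) (by omega)
    exact aux a (he a) .refl (lt_of_lt_of_le h1 (rtg_mono x G hx (he c)))
  -- key lemma, right side
  have keyR : ∀ c b, x c < x b → y b < y c → x (e c) ≤ x (e b) →
      ∃ b', e b' = e b ∧ x (e c) < x b' ∧ y b' < y (e c) := by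
    intro c b h1 h2 h3
    have aux : ∀ z, Relation.ReflTransGen G z (e b) → Relation.ReflTransGen G b z →
        y z < y (e c) → ∃ b', e b' = e b ∧ x (e c) < x b' ∧ y b' < y (e c) := by
      intro z hz
      induction hz using Relation.ReflTransGen.head_induction_on with
      | refl =>
        intro _ h
        have : x (e c) ≠ x (e b) := fun hh => by
          have := hxi hh
          rw [this] at h; omega
        exact ⟨e b, (heR _ _ (he b)).symm, by omega, h⟩
      | @head z z1 g hz1 ih =>
        intro haz hlt
        have ez : e z = e b := (heR _ _ haz).symm
        by_cases q : x (e c) < x z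
        · exact ⟨z, ez, q, hlt⟩
        have qne : x z ≠ x (e c) := fun h => by
          have := hxi h
          rw [this] at hlt; omega
        by_cases q1 : y z1 < y (e c)
        · exact ih (haz.tail g) q1
        exfalso
        by_cases q2 : z1 = e c
        · exact hcross c b (e c) z1 (he c) (haz.tail g) h1 h2 (Or.inl q2.symm)
        have ex : x z1 ≠ x (e c) := fun h => q2 (hxi h)
        have ey : y z1 ≠ y (e c) := fun h => q2 (hyi h)
        by_cases q3 : x z1 < x (e c)
        · exact hcross c b (e c) z1 (he c) (haz.tail g) h1 h2 (Or.inr ⟨q3, by omega⟩)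
        · exact hrect z z1 (e c) g (by omega) (by omega) hlt (by omega)
    exact aux b (he b) .refl (lt_of_lt_of_le h2 (rtg_mono y G hy (he c)))
  -- relation on chains
  let R : V → V → Prop := fun s t => ∃ a b, e a = s ∧ e b = t ∧ x a < x b ∧ y b < y a
  have hirr : ∀ s, ¬ R s s := by
    rintro s ⟨a, b, ha, hb, h1, h2⟩
    exact hcross a b (e a) (e b) (he a) (he b) h1 h2 (Or.inl (ha.trans hb.symm))
  have htr : ∀ s m t, R s m → R m t → x m ≤ x s → x m ≤ x t → R s t := by
    rintro s m t ⟨a, c, rfl, rfl, h1, h2⟩ ⟨c', b, hc, rfl, h3, h4⟩ h5 h6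
    obtain ⟨a', ea, k1, k2⟩ := keyL a c h1 h2 h5
    obtain ⟨b', eb, k3, k4⟩ := keyR c' b h3 h4 (by rw [hc]; exact h6)
    rw [hc] at k3 k4
    exact ⟨a', b', ea, eb, by omega, by omega⟩
  have hf : ∀ S : Finset V, ∃ f : V → ℝ, ∀ s ∈ S, ∀ t ∈ S, R s t → f t < f s := by
    intro S
    induction S using Finset.induction_on_min_value x with
    | empty => exact ⟨fun _ => 0, by simp⟩
    | insert m S hm hmin ih =>
      obtain ⟨f, hf⟩ := ih
      classical
      obtain ⟨r, hr1, hr2⟩ : ∃ r : ℝ, (∀ t ∈ S.filter (fun t => R m t), f t < r) ∧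
          (∀ s ∈ S.filter (fun s => R s m), r < f s) := by
        obtain ⟨r, h1, h2⟩ := Order.exists_between_finsets
          ((S.filter (fun t => R m t)).image f) ((S.filter (fun s => R s m)).image f) (by
            intro p hp q hq
            rw [Finset.mem_image] at hp hq
            obtain ⟨t, ht, rfl⟩ := hp
            obtain ⟨s, hs, rfl⟩ := hq
            rw [Finset.mem_filter] at ht hs
            exact hf s hs.1 t ht.1 (htr s m t hs.2 ht.2 (hmin s hs.1) (hmin t ht.1)))
        exact ⟨r, fun t ht => h1 _ (Finset.mem_image_of_mem f ht),
          fun s hs => h2 _ (Finset.mem_image_of_mem f hs)⟩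
      refine ⟨Function.update f m r, ?_⟩
      intro s hs t ht hst
      rw [Finset.mem_insert] at hs ht
      by_cases hsm : s = m
      · by_cases htm : t = m
        · subst hsm; subst htm; exact absurd hst (hirr _)
        · subst hsm
          rw [Function.update_self, Function.update_of_ne htm]
          exact hr1 t (Finset.mem_filter.2 ⟨ht.resolve_left htm, hst⟩)
      · by_cases htm : t = m
        · subst htm
          rw [Function.update_self, Function.update_of_ne hsm]
          exact hr2 s (Finset.mem_filter.2 ⟨hs.resolve_left hsm, hst⟩)
        · rw [Function.update_of_ne htm, Function.update_of_ne hsm]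
          exact hf s (hs.resolve_left hsm) t (ht.resolve_left htm) hst
  obtain ⟨f, hf⟩ := hf Finset.univ
  refine ⟨fun a => f (e a), fun a b h => by simp only [heG a b h], fun a b h1 h2 => ?_⟩
  exact hf _ (Finset.mem_univ _) _ (Finset.mem_univ _) ⟨a, b, rfl, rfl, h1, h2⟩

end Planar

section Length

variable {n : ℕ}

/-- Symmetric inversion indicator. -/
def invInd (u : Equiv.Perm (Fin n)) (k l : Fin n) : ℕ :=
  if (k < l ∧ u l < u k) ∨ (l < k ∧ u k < u l) then 1 else 0

theorem invInd_symm (u : Equiv.Perm (Fin n)) (k l : Fin n) : invInd u k l = invInd u l k := by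
  unfold invInd
  congr 1
  exact propext or_comm

theorem invInd_self (u : Equiv.Perm (Fin n)) (k : Fin n) : invInd u k k = 0 := by
  simp [invInd]

theorem two_invLen (u : Equiv.Perm (Fin n)) : 2 * invLen u = ∑ k, ∑ l, invInd u k l := by
  have h : invLen u = ∑ k, ∑ l, if (k < l ∧ u l < u k) then 1 else 0 := by
    rw [invLen, Finset.card_filter, Fintype.sum_prod_type]
  have h' : invLen u = ∑ k, ∑ l, if (l < k ∧ u k < u l) then 1 else 0 := by
    rw [h, Finset.sum_comm]
  rw [two_mul]
  nth_rewrite 1 [h]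
  rw [h', ← Finset.sum_add_distrib]
  refine Finset.sum_congr rfl fun k _ => ?_
  rw [← Finset.sum_add_distrib]
  refine Finset.sum_congr rfl fun l _ => ?_
  unfold invInd
  split_ifs <;> first | rfl | omega

theorem sum_split {i j : Fin n} (hij : i ≠ j) (F : Fin n → ℕ) :
    ∑ k, F k = F i + F j + ∑ k ∈ Finset.univ \ {i, j}, F k := by
  rw [← Finset.sum_sdiff (Finset.subset_univ ({i, j} : Finset (Fin n))),
    Finset.sum_pair hij, add_comm]

theorem two_invLen_split (u : Equiv.Perm (Fin n)) {i j : Fin n} (hij : i ≠ j) :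
    2 * invLen u = 2 * invInd u i j + 2 * ∑ k ∈ Finset.univ \ {i, j}, (invInd u k i + invInd u k j)
      + ∑ k ∈ Finset.univ \ {i, j}, ∑ l ∈ Finset.univ \ {i, j}, invInd u k l := by
  rw [two_invLen, sum_split hij, sum_split hij (invInd u i), sum_split hij (invInd u j)]
  have : ∀ k, ∑ l, invInd u k l = invInd u k i + invInd u k j +
    ∑ l ∈ Finset.univ \ {i, j}, invInd u k l := fun k => sum_split hij _
  have s1 : ∑ l ∈ Finset.univ \ {i, j}, invInd u i l = ∑ l ∈ Finset.univ \ {i, j}, invInd u l i :=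
    Finset.sum_congr rfl fun l _ => invInd_symm u i l
  have s2 : ∑ l ∈ Finset.univ \ {i, j}, invInd u j l = ∑ l ∈ Finset.univ \ {i, j}, invInd u l j :=
    Finset.sum_congr rfl fun l _ => invInd_symm u j l
  simp only [this, Finset.sum_add_distrib, invInd_self, s1, s2]
  rw [invInd_symm u j i]
  ring

theorem invLen_swap (u : Equiv.Perm (Fin n)) {i j : Fin n} (hij : i < j) (hu : u i < u j) :
    invLen (Equiv.swap (u i) (u j) * u) = invLen u + 1 +
      2 * (Finset.univ.filter
        (fun k : Fin n => (i < k ∧ k < j) ∧ (u i < u k ∧ u k < u j))).card := by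
  set v := Equiv.swap (u i) (u j) * u with hv
  have vi : v i = u j := by simp [hv]
  have vj : v j = u i := by simp [hv]
  have vk : ∀ k, k ≠ i → k ≠ j → v k = u k := by
    intro k h1 h2
    simp only [hv, Equiv.Perm.mul_apply]
    exact Equiv.swap_apply_of_ne_of_ne (fun h => h1 (u.injective h)) (fun h => h2 (u.injective h))
  have e1 := two_invLen_split u hij.ne
  have e2 := two_invLen_split v hij.ne
  have a1 : invInd u i j = 0 := by
    unfold invInd; rw [if_neg]; omega
  have a2 : invInd v i j = 1 := by
    unfold invInd; rw [if_pos]; rw [vi, vj]; exact Or.inl ⟨hij, hu⟩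
  have a3 : ∑ k ∈ Finset.univ \ {i, j}, ∑ l ∈ Finset.univ \ {i, j}, invInd v k l =
      ∑ k ∈ Finset.univ \ {i, j}, ∑ l ∈ Finset.univ \ {i, j}, invInd u k l := by
    refine Finset.sum_congr rfl fun k hk => Finset.sum_congr rfl fun l hl => ?_
    simp only [Finset.mem_sdiff, Finset.mem_univ, true_and, Finset.mem_insert,
      Finset.mem_singleton, not_or] at hk hl
    unfold invInd
    rw [vk k hk.1 hk.2, vk l hl.1 hl.2]
  have a4 : ∑ k ∈ Finset.univ \ {i, j}, (invInd v k i + invInd v k j) =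
      ∑ k ∈ Finset.univ \ {i, j}, (invInd u k i + invInd u k j) +
      2 * (Finset.univ.filter
        (fun k : Fin n => (i < k ∧ k < j) ∧ (u i < u k ∧ u k < u j))).card := by
    have : (Finset.univ.filter
        (fun k : Fin n => (i < k ∧ k < j) ∧ (u i < u k ∧ u k < u j))).card =
        ∑ k ∈ Finset.univ \ {i, j},
          if (i < k ∧ k < j) ∧ (u i < u k ∧ u k < u j) then 1 else 0 := by
      rw [Finset.card_filter, sum_split hij.ne]
      simp
    rw [this, Finset.mul_sum, ← Finset.sum_add_distrib]
    refine Finset.sum_congr rfl fun k hk => ?_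
    simp only [Finset.mem_sdiff, Finset.mem_univ, true_and, Finset.mem_insert,
      Finset.mem_singleton, not_or] at hk
    have n1 : u k ≠ u i := fun h => hk.1 (u.injective h)
    have n2 : u k ≠ u j := fun h => hk.2 (u.injective h)
    obtain ⟨n3, n4⟩ := hk
    unfold invInd
    rw [vk k n3 n4, vi, vj]
    generalize u k = uk at *
    generalize u i = ui at *
    generalize u j = uj at *
    clear e1 e2 a1 a2 a3 this vi vj vk hv
    split_ifs <;> omega
  rw [a3, a4, a2] at e2
  rw [a1] at e1
  omega

theorem invLen_swap_down (u : Equiv.Perm (Fin n)) {i j : Fin n} (hij : i < j) (hu : u j < u i) :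
    invLen u = invLen (Equiv.swap (u i) (u j) * u) + 1 +
      2 * (Finset.univ.filter
        (fun k : Fin n => (i < k ∧ k < j) ∧ (u j < u k ∧ u k < u i))).card := by
  set v := Equiv.swap (u i) (u j) * u with hv
  have vi : v i = u j := by simp [hv]
  have vj : v j = u i := by simp [hv]
  have vk : ∀ k, k ≠ i → k ≠ j → v k = u k := by
    intro k h1 h2
    simp only [hv, Equiv.Perm.mul_apply]
    exact Equiv.swap_apply_of_ne_of_ne (fun h => h1 (u.injective h)) (fun h => h2 (u.injective h))
  have := invLen_swap v hij (by rw [vi, vj]; exact hu)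
  have huv : Equiv.swap (v i) (v j) * v = u := by
    rw [vi, vj, hv, ← mul_assoc, Equiv.swap_comm, Equiv.swap_mul_self, one_mul]
  rw [huv, vi, vj] at this
  rw [this]
  congr 3
  refine Finset.filter_congr fun k _ => ?_
  by_cases h1 : k = i
  · subst h1; simp
  by_cases h2 : k = j
  · subst h2; simp
  rw [vk k h1 h2]

theorem bruhat_cons {v u w : Equiv.Perm (Fin n)} (τ : Equiv.Perm (Fin n))
    (hτ : IsTransposition τ) (hu : u = τ * v) (hl : invLen v < invLen u) (h : BruhatLE u w) :
    BruhatLE v w := by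
  obtain ⟨m, c, h0, hm, hc⟩ := h
  refine ⟨m + 1, fun k => Nat.casesOn k v c, rfl, hm, ?_⟩
  intro k hk
  cases k with
  | zero => exact ⟨⟨τ, hτ, by simpa [h0] using hu⟩, by simpa [h0] using hl⟩
  | succ k => exact hc k (by omega)

/-- Every inversion is joined by a directed path in `Ẽ_w(u)`. -/
theorem inv_path {w u : Equiv.Perm (Fin n)} (hle : BruhatLE u w) (N : ℕ) :
    ∀ i j : Fin n, (j : ℕ) ≤ i + N → i < j → u j < u i →
      Relation.TransGen (fun a b : Fin n => (a, b) ∈ Etilde w u) (u i) (u j) := by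
  induction N with
  | zero => intro i j h1 h2; omega
  | succ N ih =>
    intro i j hN hij hu
    by_cases h : ∃ k, (i < k ∧ k < j) ∧ (u j < u k ∧ u k < u i)
    · obtain ⟨k, ⟨h1, h2⟩, h3, h4⟩ := h
      exact (ih i k (by omega) h1 h4).trans (ih k j (by omega) h2 h3)
    · have e := invLen_swap_down u hij hu
      have : (Finset.univ.filter
        (fun k : Fin n => (i < k ∧ k < j) ∧ (u j < u k ∧ u k < u i))).card = 0 := by
        rw [Finset.card_eq_zero, Finset.filter_eq_empty_iff]
        exact fun k _ hk => h ⟨k, hk⟩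
      rw [this] at e
      refine .single ⟨i, j, hij, rfl, ?_, ?_⟩
      · refine bruhat_cons (Equiv.swap (u i) (u j)) ⟨u i, u j, hu.ne', rfl⟩ ?_ (by omega) hle
        rw [← mul_assoc, Equiv.swap_mul_self, one_mul]
      · rw [e]
        push_cast
        rw [abs_eq (by norm_num)]
        right; ring

end Length

theorem stmt7 {n : ℕ} (hn : 1 ≤ n) (w u : Equiv.Perm (Fin n)) (hle : BruhatLE u w) :
    ∃ F : (Fin n → ℝ) →ₗ[ℝ] ℝ,
      (∀ p ∈ Eplus w u, F (mu (Equiv.swap p.1 p.2 * u)) = F (mu u)) ∧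
      (∀ p ∈ Eminus w u, F (mu u) < F (mu (Equiv.swap p.1 p.2 * u))) ∧
      (∀ p ∈ Eplus w u, F (stdB p.1 - stdB p.2) = 0) ∧
      (∀ p ∈ Eminus w u, 0 < F (stdB p.1 - stdB p.2)) := by
  have hpos : ∀ a b, (a, b) ∈ Etilde w u → u⁻¹ a < u⁻¹ b := by
    rintro a b ⟨i, j, hij, hp, _⟩
    rw [Prod.mk.injEq] at hp
    rw [hp.1, hp.2]
    simpa using hij
  have hpath : ∀ a b : Fin n, (u⁻¹ a : ℕ) < (u⁻¹ b : ℕ) → (b : ℕ) < (a : ℕ) →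
      Relation.TransGen (fun a b : Fin n => (a, b) ∈ Etilde w u) a b := by
    intro a b h1 h2
    have := inv_path hle n (u⁻¹ a) (u⁻¹ b) (by omega) h1 (by simpa using h2)
    simpa using this
  have hred : ∀ a b c : Fin n, (a, b) ∈ Ered w u →
      Relation.TransGen (fun a b : Fin n => (a, b) ∈ Etilde w u) a c →
      Relation.TransGen (fun a b : Fin n => (a, b) ∈ Etilde w u) c b → False := by
    intro a b c hab h1 h2
    obtain ⟨d, hd, hdc⟩ := Relation.TransGen.head'_iff.1 h1
    exact hab.2 ⟨d, hd, Relation.TransGen.trans_right hdc h2⟩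
  obtain ⟨f, hf1, hf2⟩ := planar_fun (fun a : Fin n => ((u⁻¹ a : Fin n) : ℕ)) (fun a => (a : ℕ))
    (fun a b h => u⁻¹.injective (Fin.ext h)) (fun a b h => Fin.ext h)
    (fun a b => (a, b) ∈ Eplus w u)
    (fun a b h => hpos a b h.1.1) (fun a b h => h.2)
    (by
      rintro a b c ⟨⟨⟨i, j, hij, hp, -, hl⟩, -⟩, hab⟩ h1 h2 h3 h4
      rw [Prod.mk.injEq] at hp
      obtain ⟨rfl, rfl⟩ := hp
      obtain ⟨k, rfl⟩ := u.surjective c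
      have e := invLen_swap u hij hab
      have : 0 < (Finset.univ.filter
        (fun k : Fin n => (i < k ∧ k < j) ∧ (u i < u k ∧ u k < u j))).card := by
        rw [Finset.card_pos]
        refine ⟨k, Finset.mem_filter.2 ⟨Finset.mem_univ _, ⟨?_, ?_⟩, h3, h4⟩⟩
        · simpa using h1
        · simpa using h2
      rw [abs_eq (by norm_num)] at hl
      omega)
    (by
      intro a b c d hab hcd h1 h2 h3 h4
      exact hred a b c hab.1 (hpath a c h1 h2) (.trans (.single hcd.1.1) (hpath d b h3 h4)))
    (by
      intro a b c hab hcb h1 h2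
      exact hred a b c hab.1 (hpath a c h1 h2) (.single hcb.1.1))
    (by
      intro a b c hca hcb h1 h2
      exact hred c b a hcb.1 (.single hca.1.1) (hpath a b h1 h2))
  let F : (Fin n → ℝ) →ₗ[ℝ] ℝ := ∑ k, f k • LinearMap.proj k
  have hF : ∀ v, F v = ∑ k, f k * v k := by
    intro v
    simp [F, LinearMap.sum_apply]
  have hFe : ∀ a b, F (stdB a - stdB b) = f a - f b := by
    intro a b
    rw [map_sub, hF, hF]
    simp [stdB]
  have hFmu : ∀ a b, F (mu (Equiv.swap a b * u)) - F (mu u) =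
      (((u⁻¹ b : Fin n) : ℝ) - ((u⁻¹ a : Fin n) : ℝ)) * (f a - f b) := by
    intro a b
    rw [← hFe, ← map_sub, ← smul_eq_mul (_ - _ : ℝ), ← map_smul]
    congr 1
    funext k
    simp only [mu, stdB, Pi.sub_apply, Pi.smul_apply, smul_eq_mul, mul_inv_rev,
      Equiv.swap_inv, Equiv.Perm.mul_apply]
    by_cases h1 : k = a
    · subst h1
      by_cases h2 : k = b
      · subst h2; simp
      · simp [h2]
    · by_cases h2 : k = b
      · subst h2; simp [h1]
      · simp [h1, h2, Equiv.swap_apply_of_ne_of_ne]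
  have hm : ∀ a b, (a, b) ∈ Eminus w u → 0 < f a - f b := fun a b h =>
    sub_pos.2 (hf2 a b (hpos a b h.1.1) h.2)
  refine ⟨F, ?_, ?_, ?_, ?_⟩
  · rintro ⟨a, b⟩ h
    have := hFmu a b
    rw [hf1 a b h, sub_self, mul_zero] at this
    exact sub_eq_zero.1 this
  · rintro ⟨a, b⟩ h
    have h1 := hFmu a b
    have h2 : (0 : ℝ) < ((u⁻¹ b : Fin n) : ℝ) - ((u⁻¹ a : Fin n) : ℝ) := by
      rw [sub_pos]
      exact_mod_cast hpos a b h.1.1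
    have h3 := mul_pos h2 (hm a b h)
    rw [← h1] at h3
    exact sub_pos.1 h3
  · rintro ⟨a, b⟩ h
    simp only [hFe, hf1 a b h, sub_self]
  · rintro ⟨a, b⟩ h
    simp only [hFe]
    exact hm a b h
end
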